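/- arXiv:1306.4118 — 5 statements merged into one kernel-verified Lean document; each statement's English description precedes it below -/
import Mathlib

section
/- Let A be a commutative ring, B a finitely generated A-algebra, and M a B-module. If M is finitely presented as an A-module, then M is finitely presented as a B-module. -/
/-!
Choose a surjection `p : F → M` of `B`-modules with `F` finite free, together with a finitely
generated `A`-submodule `V` of `F` that spans `F` over `B` and maps onto `M`. For each of finitely
many algebra generators `s` of `B` and module generators `g` of `V` pick `w ∈ V` with
`p w = s • p g`. Modulo the finitely many relations `s • g - w` the submodule `V` becomes stable
under `B`, hence is everything, so every element of `ker p` is congruent to one of `ker p ⊓ V`.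
The latter is finitely generated over `A` because `M` is finitely presented over `A`.
-/

section Semiring

variable {A B F : Type*} [CommSemiring A] [Semiring B] [Algebra A B]
  [AddCommMonoid F] [Module A F] [Module B F] [IsScalarTower A B F]

theorem smul_mem_of_adjoin_eq_top {S : Set B} (hS : Algebra.adjoin A S = ⊤) {W : Submodule A F}
    (hW : ∀ s ∈ S, ∀ x ∈ W, s • x ∈ W) (b : B) {x : F} (hx : x ∈ W) : b • x ∈ W := by
  have hb : b ∈ Algebra.adjoin A S := hS ▸ Algebra.mem_top
  induction hb using Algebra.adjoin_induction generalizing x with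
  | mem s hs => exact hW s hs x hx
  | algebraMap a => simpa only [algebraMap_smul] using W.smul_mem a hx
  | add b c _ _ ihb ihc => simpa only [add_smul] using W.add_mem (ihb hx) (ihc hx)
  | mul b c _ _ ihb ihc => simpa only [mul_smul] using ihb (ihc hx)

theorem sup_restrictScalars_eq_top_of_smul_mem {S : Set B} (hS : Algebra.adjoin A S = ⊤)
    {V : Submodule A F} (hV : Submodule.span B (V : Set F) = ⊤) {N : Submodule B F}
    (hVN : ∀ s ∈ S, ∀ v ∈ V, s • v ∈ V ⊔ N.restrictScalars A) :
    V ⊔ N.restrictScalars A = ⊤ := by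
  have smul_mem_of_mem : ∀ s ∈ S, ∀ x ∈ V ⊔ N.restrictScalars A,
      s • x ∈ V ⊔ N.restrictScalars A := by
    intro s hs x hx
    obtain ⟨v, hv, n, hn, rfl⟩ := Submodule.mem_sup.1 hx
    rw [smul_add]
    exact add_mem (hVN s hs v hv) (Submodule.mem_sup_right (N.smul_mem s hn))
  refine eq_top_iff.2 fun x _ ↦ ?_
  have hx : x ∈ Submodule.span B (V : Set F) := hV ▸ Submodule.mem_top
  induction hx using Submodule.span_induction with
  | mem v hv => exact Submodule.mem_sup_left hv
  | zero => exact zero_mem _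
  | add y z _ _ hy hz => exact add_mem (hy trivial) (hz trivial)
  | smul b y _ hy => exact smul_mem_of_adjoin_eq_top hS smul_mem_of_mem b (hy trivial)

end Semiring

theorem fg_ker_inf_of_map_eq_top {R F M : Type*} [Ring R] [AddCommGroup F] [Module R F]
    [AddCommGroup M] [Module R M] [Module.FinitePresentation R M] {V : Submodule R F} (hV : V.FG)
    (f : F →ₗ[R] M) (hfV : V.map f = ⊤) : (LinearMap.ker f ⊓ V).FG := by
  have : Module.Finite R V := Module.Finite.of_fg hV
  have surjective_domRestrict : Function.Surjective (f.domRestrict V) := by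
    rw [← LinearMap.range_eq_top, LinearMap.range_domRestrict, hfV]
  have fg_map := (Module.FinitePresentation.fg_ker _ surjective_domRestrict).map V.subtype
  rwa [LinearMap.ker_domRestrict, Submodule.map_comap_subtype, inf_comm] at fg_map

section Ring

variable {A B F M : Type*} [CommRing A] [Ring B] [Algebra A B]
  [AddCommGroup F] [Module A F] [Module B F] [IsScalarTower A B F]
  [AddCommGroup M] [Module A M] [Module B M] [IsScalarTower A B M]

theorem exists_fg_le_ker_forall_smul_mem_sup {S : Set B} (hS : S.Finite) {V : Submodule A F}
    (hV : V.FG) (p : F →ₗ[B] M) (hpV : V.map (p.restrictScalars A) = ⊤) :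
    ∃ N : Submodule B F, N.FG ∧ N ≤ LinearMap.ker p ∧
      ∀ s ∈ S, ∀ v ∈ V, s • v ∈ V ⊔ N.restrictScalars A := by
  obtain ⟨G, hG, rfl⟩ := Submodule.fg_def.1 hV
  have exists_lift (m : M) : ∃ w ∈ Submodule.span A G, p w = m :=
    Submodule.mem_map.1 (hpV ▸ Submodule.mem_top)
  choose lift lift_mem map_lift using exists_lift
  let relation (s : B) (g : F) : F := s • g - lift (s • p g)
  let N : Submodule B F := Submodule.span B (Set.image2 relation S G)
  refine ⟨N, Submodule.fg_span (hS.image2 relation hG), ?_, fun s hs v hv ↦ ?_⟩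
  · rw [Submodule.span_le]
    rintro _ ⟨s, -, g, -, rfl⟩
    simp [relation, map_lift]
  · suffices Submodule.span A G ≤
        (Submodule.span A G ⊔ N.restrictScalars A).comap (Algebra.lsmul A A F s) from this hv
    refine Submodule.span_le.2 fun g hg ↦ ?_
    have relation_mem : relation s g ∈ N := Submodule.subset_span (Set.mem_image2_of_mem hs hg)
    exact Submodule.mem_sup.2 ⟨lift (s • p g), lift_mem _, relation s g, relation_mem,
      add_sub_cancel _ _⟩

theorem fg_ker_of_span_eq_top_of_map_eq_top [Algebra.FiniteType A B]
    [Module.FinitePresentation A M] {V : Submodule A F} (hV : V.FG)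
    (hspan : Submodule.span B (V : Set F) = ⊤) (p : F →ₗ[B] M)
    (hpV : V.map (p.restrictScalars A) = ⊤) : (LinearMap.ker p).FG := by
  obtain ⟨S, hS⟩ := Algebra.FiniteType.out (R := A) (A := B)
  obtain ⟨N, hN, hNp, hVN⟩ := exists_fg_le_ker_forall_smul_mem_sup S.finite_toSet hV p hpV
  obtain ⟨K, hK⟩ := fg_ker_inf_of_map_eq_top hV (p.restrictScalars A) hpV
  have hKp : (K : Set F) ⊆ LinearMap.ker p := fun k hk ↦
    (hK.le (Submodule.subset_span hk)).1
  suffices LinearMap.ker p = Submodule.span B K ⊔ N from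
    this ▸ (Submodule.fg_span K.finite_toSet).sup hN
  refine le_antisymm (fun x hx ↦ ?_) (sup_le (Submodule.span_le.2 hKp) hNp)
  have hx_sup : x ∈ V ⊔ N.restrictScalars A :=
    sup_restrictScalars_eq_top_of_smul_mem hS hspan hVN ▸ Submodule.mem_top
  obtain ⟨v, hv, n, hn, rfl⟩ := Submodule.mem_sup.1 hx_sup
  have hv_ker : v ∈ LinearMap.ker p := (Submodule.add_mem_iff_left _ (hNp hn)).1 hx
  have hv_span : v ∈ Submodule.span A (K : Set F) := hK.ge ⟨hv_ker, hv⟩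
  exact Submodule.add_mem_sup (Submodule.span_le_restrictScalars A B _ hv_span) hn

end Ring

theorem finitePresentation_over_finiteType_algebra_general
    (A B M : Type*) [CommRing A] [Ring B] [Algebra A B] [Algebra.FiniteType A B]
    [AddCommGroup M] [Module A M] [Module B M] [IsScalarTower A B M]
    [Module.FinitePresentation A M] :
    Module.FinitePresentation B M := by
  obtain ⟨n, m, hm⟩ := Module.Finite.exists_fin (R := A) (M := M)
  let p : (Fin n → B) →ₗ[B] M := Fintype.linearCombination B m
  let basis := Pi.basisFun B (Fin n)
  let V : Submodule A (Fin n → B) := Submodule.span A (Set.range basis)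
  have map_V : V.map (p.restrictScalars A) = ⊤ := by
    have map_basis : p ∘ basis = m := by ext i; simp [p, basis]
    rw [Submodule.map_span, ← Set.range_comp, LinearMap.coe_restrictScalars, map_basis, hm]
  have span_V : Submodule.span B (V : Set (Fin n → B)) = ⊤ := by
    rw [Submodule.span_span_of_tower, basis.span_eq]
  have surjective_p : Function.Surjective p := fun x ↦
    have ⟨v, _, hv⟩ := Submodule.mem_map.1 (map_V.ge (Submodule.mem_top (x := x)))
    ⟨v, hv⟩
  exact Module.finitePresentation_of_free_of_surjective p surjective_p
    (fg_ker_of_span_eq_top_of_map_eq_top (Submodule.fg_span (Set.finite_range basis)) span_V p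
      map_V)

/-- Let `A` be a commutative ring, `B` a finitely generated `A`-algebra, and
`M` a `B`-module (regarded as an `A`-module via restriction of scalars). If `M` is finitely
presented as an `A`-module, then `M` is finitely presented as a `B`-module. -/
theorem finitePresentation_over_finiteType_algebra
    (A B M : Type*) [CommRing A] [CommRing B] [Algebra A B] [Algebra.FiniteType A B]
    [AddCommGroup M] [Module A M] [Module B M] [IsScalarTower A B M]
    (h : Module.FinitePresentation A M) :
    Module.FinitePresentation B M :=
  finitePresentation_over_finiteType_algebra_general A B M
end

section
/- Let A be a commutative ring, B an A-algebra generated as an A-algebra by elements b₁, …, bₙ, and M a B-module generated as an A-module by elements m₁, …, m_r. Let N be the kernel of the B-linear map M ⊗_A B → M sending m ⊗ b to b·m. Then N is generated as a B-module by the elements m_j ⊗ b_i − (b_i·m_j) ⊗ 1 for 1 ≤ i ≤ n and 1 ≤ j ≤ r. -/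
open TensorProduct

/-!
Write `D c x = c ⊗ x - 1 ⊗ (c • x)`. Modulo the `D c x`, every tensor `t` is congruent to
`1 ⊗ μ t`, where `μ` is the multiplication map, so the `D c x` generate `ker μ`. As `D` is
`A`-linear in `x` and satisfies the Leibniz-type rule `D (c * d) x = c • D d x + D c (d • x)`, it is
enough to let `x` run through `A`-module generators of `M` and `c` through `A`-algebra generators
of `B`.
-/

lemma map_tmul_eq_smul_map_one_tmul {A B M P : Type*} [CommSemiring A] [Semiring B] [Algebra A B]
    [AddCommMonoid M] [Module A M] [AddCommMonoid P] [Module B P]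
    (f : B ⊗[A] M →ₗ[B] P) (c : B) (x : M) : f (c ⊗ₜ x) = c • f (1 ⊗ₜ x) := by
  rw [← map_smul, smul_tmul', smul_eq_mul, mul_one]

section SMulDefect

variable {A B M : Type*} [CommSemiring A] [Ring B] [Algebra A B]
  [AddCommGroup M] [Module A M] [Module B M] [IsScalarTower A B M]

variable (A B M) in
/-- The `A`-bilinear map `(c, x) ↦ c ⊗ x - 1 ⊗ (c • x)`, measuring the failure of the `A`-linear
map `x ↦ 1 ⊗ x` to be `B`-linear. -/
noncomputable def smulDefect : B →ₗ[A] M →ₗ[A] B ⊗[A] M :=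
  LinearMap.mk₂ A (fun c x ↦ c ⊗ₜ[A] x - 1 ⊗ₜ[A] (c • x))
    (fun c d x ↦ by rw [add_tmul, add_smul, tmul_add, add_sub_add_comm])
    (fun a c x ↦ by rw [smul_assoc, tmul_smul, ← smul_tmul', smul_sub])
    (fun c x y ↦ by rw [smul_add, tmul_add, tmul_add, add_sub_add_comm])
    (fun a c x ↦ by rw [smul_comm c a x, tmul_smul, tmul_smul, smul_sub])

lemma smulDefect_apply (c : B) (x : M) :
    smulDefect A B M c x = c ⊗ₜ[A] x - 1 ⊗ₜ[A] (c • x) :=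
  rfl

lemma smulDefect_algebraMap (a : A) (x : M) : smulDefect A B M (algebraMap A B a) x = 0 := by
  rw [smulDefect_apply, algebraMap_smul, Algebra.algebraMap_eq_smul_one, smul_tmul, sub_self]

lemma smulDefect_mul (c d : B) (x : M) :
    smulDefect A B M (c * d) x = c • smulDefect A B M d x + smulDefect A B M c (d • x) := by
  simp [smulDefect_apply, smul_sub, smul_tmul', mul_smul]

lemma smulDefect_mem_of_mem_span {S : Submodule B (B ⊗[A] M)} {c : B} {t : Set M}
    (hS : ∀ x ∈ t, smulDefect A B M c x ∈ S) {x : M} (hx : x ∈ Submodule.span A t) :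
    smulDefect A B M c x ∈ S :=
  (Submodule.span_le (p := (S.restrictScalars A).comap (smulDefect A B M c))).mpr hS hx

lemma smulDefect_mem_of_mem_adjoin {S : Submodule B (B ⊗[A] M)} {s : Set B}
    (hS : ∀ c ∈ s, ∀ x, smulDefect A B M c x ∈ S) {c : B} (hc : c ∈ Algebra.adjoin A s) (x : M) :
    smulDefect A B M c x ∈ S := by
  induction hc using Algebra.adjoin_induction generalizing x with
  | mem c hc => exact hS c hc x
  | algebraMap a =>
    rw [smulDefect_algebraMap]
    exact S.zero_mem
  | add c d _ _ hc hd =>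
    rw [map_add, LinearMap.add_apply]
    exact S.add_mem (hc x) (hd x)
  | mul c d _ _ hc hd =>
    rw [smulDefect_mul]
    exact S.add_mem (S.smul_mem c (hd x)) (hc (d • x))

lemma smulDefect_mem_ker {μ : B ⊗[A] M →ₗ[B] M} (hμ : ∀ x, μ (1 ⊗ₜ x) = x) (c : B) (x : M) :
    smulDefect A B M c x ∈ LinearMap.ker μ := by
  rw [LinearMap.mem_ker, smulDefect_apply, map_sub, map_tmul_eq_smul_map_one_tmul, hμ, hμ, sub_self]

lemma sub_one_tmul_map_mem {μ : B ⊗[A] M →ₗ[B] M} (hμ : ∀ x, μ (1 ⊗ₜ x) = x)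
    {S : Submodule B (B ⊗[A] M)} (hS : ∀ c x, smulDefect A B M c x ∈ S) (t : B ⊗[A] M) :
    t - 1 ⊗ₜ μ t ∈ S := by
  induction t using TensorProduct.induction_on with
  | zero => simp
  | tmul c x =>
    rw [map_tmul_eq_smul_map_one_tmul, hμ, ← smulDefect_apply]
    exact hS c x
  | add t u ht hu =>
    rw [map_add, tmul_add, add_sub_add_comm]
    exact S.add_mem ht hu

lemma ker_le_of_smulDefect_mem {μ : B ⊗[A] M →ₗ[B] M} (hμ : ∀ x, μ (1 ⊗ₜ x) = x)
    {S : Submodule B (B ⊗[A] M)} (hS : ∀ c x, smulDefect A B M c x ∈ S) :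
    LinearMap.ker μ ≤ S := fun t ht ↦ by
  simpa [LinearMap.mem_ker.mp ht] using sub_one_tmul_map_mem hμ hS t

theorem ker_baseChange_smul_span_general {μ : B ⊗[A] M →ₗ[B] M} (hμ : ∀ x, μ (1 ⊗ₜ x) = x)
    {ι κ : Type*} {b : ι → B} {m : κ → M}
    (hb : Algebra.adjoin A (Set.range b) = ⊤) (hm : Submodule.span A (Set.range m) = ⊤) :
    LinearMap.ker μ =
      Submodule.span B
        (Set.range fun p : ι × κ => b p.1 ⊗ₜ[A] m p.2 - (1 : B) ⊗ₜ[A] (b p.1 • m p.2)) := by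
  simp_rw [← smulDefect_apply]
  apply le_antisymm
  · refine ker_le_of_smulDefect_mem hμ fun c x ↦
      smulDefect_mem_of_mem_adjoin ?_ (hb ▸ Algebra.mem_top) x
    rintro _ ⟨i, rfl⟩ x
    refine smulDefect_mem_of_mem_span ?_ (hm ▸ Submodule.mem_top)
    rintro _ ⟨j, rfl⟩
    exact Submodule.subset_span ⟨(i, j), rfl⟩
  · rw [Submodule.span_le]
    rintro _ ⟨p, rfl⟩
    exact smulDefect_mem_ker hμ (b p.1) (m p.2)

end SMulDefect

/-- Let `A` be a commutative ring, `B` an `A`-algebra generated as an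
`A`-algebra by elements `b₁, …, bₙ`, and `M` a `B`-module generated as an `A`-module by
elements `m₁, …, m_r`. Let `N` be the kernel of the `B`-linear multiplication map
`M ⊗[A] B → M`, `m ⊗ b ↦ b • m` (written here, following Mathlib's conventions for base
change, as `B ⊗[A] M → M`, `b ⊗ m ↦ b • m`). Then `N` is generated as a `B`-module by the
elements `bᵢ ⊗ mⱼ - 1 ⊗ (bᵢ • mⱼ)` for `1 ≤ i ≤ n`, `1 ≤ j ≤ r`. -/
theorem ker_baseChange_smul_span
    (A B M : Type*) [CommRing A] [CommRing B] [Algebra A B]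
    [AddCommGroup M] [Module A M] [Module B M] [IsScalarTower A B M]
    {n r : ℕ} (b : Fin n → B) (m : Fin r → M)
    (hb : Algebra.adjoin A (Set.range b) = ⊤)
    (hm : Submodule.span A (Set.range m) = ⊤) :
    LinearMap.ker ((LinearMap.id : M →ₗ[A] M).liftBaseChange B) =
      Submodule.span B
        (Set.range fun p : Fin n × Fin r =>
          b p.1 ⊗ₜ[A] m p.2 - (1 : B) ⊗ₜ[A] (b p.1 • m p.2)) :=
  ker_baseChange_smul_span_general (LinearMap.liftBaseChange_one_tmul B LinearMap.id) hb hm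
end

section
/- Let A be a commutative ring, B an A-algebra of finite presentation, and M a B-module. Then M is intrinsically of finite presentation over A if and only if M is finitely presented as a B-module. -/
/-- An `S`-module `N` is *intrinsically of finite presentation* over `R` if there exist an
`n : ℕ` and an `R`-algebra homomorphism `f : R[x₁, …, xₙ] → S` from a polynomial ring over `R`
such that `N`, viewed as an `R[x₁, …, xₙ]`-module via restriction of scalars along `f`, is
finitely presented. -/
def Module.IntrinsicallyFinitePresentation (R S N : Type*) [CommRing R] [CommRing S]
    [Algebra R S] [AddCommGroup N] [Module S N] : Prop :=
  ∃ (n : ℕ) (f : MvPolynomial (Fin n) R →ₐ[R] S),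
    letI : Module (MvPolynomial (Fin n) R) N := Module.compHom N f.toRingHom
    Module.FinitePresentation (MvPolynomial (Fin n) R) N

/-!
Suppose `S` is an `R`-algebra of finite type and `M` is an `S`-module that is finitely presented
over `R`. Then `S ⊗[R] M` is finitely presented over `S`, and the kernel of the action map
`S ⊗[R] M → M` is the sum of the images of the `S`-linear endomorphisms
`c ⊗ m ↦ a * c ⊗ m - c ⊗ a • m` as `a` runs over `R`-algebra generators of `S`. Finitely many `a`
suffice and `S ⊗[R] M` is finite over `S`, so this kernel is finitely generated and `M` is finitely
presented over `S`. Conversely, if `S` is the quotient of a ring by a finitely generated ideal, then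
it is a finitely presented module over that ring, and hence so is every finitely presented
`S`-module.
-/

namespace Module

open TensorProduct

variable (R : Type*) {S : Type*} (M : Type*) [CommRing R] [CommRing S] [Algebra R S]
  [AddCommGroup M] [Module R M] [Module S M] [IsScalarTower R S M]

/-- The action of `a ⊗ 1 - 1 ⊗ a`, an element of the kernel of the multiplication
`S ⊗[R] S → S`, on `S ⊗[R] M`. It is `S`-linear for the action of `S` on the left factor, and it
measures the failure of the two actions of `a` on `S ⊗[R] M` to agree. -/
noncomputable def diagonalDiff (a : S) : S ⊗[R] M →ₗ[S] S ⊗[R] M :=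
  a • LinearMap.id - (Algebra.lsmul R R M a).baseChange S

variable {M} in
@[simp]
lemma diagonalDiff_tmul (a c : S) (m : M) :
    diagonalDiff R M a (c ⊗ₜ m) = (a * c) ⊗ₜ m - c ⊗ₜ (a • m) := by
  simp [diagonalDiff, smul_tmul']

lemma diagonalDiff_algebraMap (r : R) : diagonalDiff R M (algebraMap R S r) = 0 := by
  ext m
  simp [Algebra.algebraMap_eq_smul_one, smul_tmul']

lemma diagonalDiff_add (a b : S) :
    diagonalDiff R M (a + b) = diagonalDiff R M a + diagonalDiff R M b := by
  simp only [diagonalDiff, map_add, add_smul, LinearMap.baseChange_add]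
  abel

lemma diagonalDiff_mul (a b : S) :
    diagonalDiff R M (a * b) =
      a • diagonalDiff R M b + diagonalDiff R M a ∘ₗ (Algebra.lsmul R R M b).baseChange S := by
  ext m
  simp [smul_sub, smul_tmul', mul_smul]

lemma range_diagonalDiff_le_of_mem_adjoin {s : Set S} {b : S} (hb : b ∈ Algebra.adjoin R s) :
    (diagonalDiff R M b).range ≤ ⨆ a ∈ s, (diagonalDiff R M a).range := by
  induction hb using Algebra.adjoin_induction with
  | mem a ha => exact le_iSup₂_of_le a ha le_rfl
  | algebraMap r => simp [diagonalDiff_algebraMap]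
  | add a b _ _ iha ihb =>
    rw [diagonalDiff_add]
    exact (LinearMap.range_add_le _ _).trans (sup_le iha ihb)
  | mul a b _ _ iha ihb =>
    rw [diagonalDiff_mul]
    refine (LinearMap.range_add_le _ _).trans (sup_le ?_ ?_)
    · rintro _ ⟨x, rfl⟩
      exact Submodule.smul_mem _ a (ihb ⟨x, rfl⟩)
    · exact (LinearMap.range_comp_le_range _ _).trans iha

variable {M} in
lemma sub_one_tmul_liftBaseChange_id_mem_iSup (x : S ⊗[R] M) :
    x - 1 ⊗ₜ (LinearMap.id : M →ₗ[R] M).liftBaseChange S x ∈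
      ⨆ a : S, (diagonalDiff R M a).range := by
  induction x with
  | zero => simp
  | tmul a m => exact Submodule.mem_iSup_of_mem a ⟨1 ⊗ₜ m, by simp⟩
  | add x y ihx ihy =>
    rw [map_add, tmul_add, add_sub_add_comm]
    exact add_mem ihx ihy

lemma liftBaseChange_id_comp_diagonalDiff (a : S) :
    (LinearMap.id : M →ₗ[R] M).liftBaseChange S ∘ₗ diagonalDiff R M a = 0 := by
  ext m
  simp

lemma ker_liftBaseChange_id_eq_iSup :
    ((LinearMap.id : M →ₗ[R] M).liftBaseChange S).ker = ⨆ a : S, (diagonalDiff R M a).range := by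
  refine le_antisymm (fun x hx ↦ ?_) (iSup_le fun a ↦ ?_)
  · simpa [LinearMap.mem_ker.mp hx] using sub_one_tmul_liftBaseChange_id_mem_iSup R x
  · exact LinearMap.range_le_ker_iff.mpr (liftBaseChange_id_comp_diagonalDiff R M a)

lemma ker_liftBaseChange_id_eq_biSup_of_adjoin_eq_top {s : Set S}
    (hs : Algebra.adjoin R s = ⊤) :
    ((LinearMap.id : M →ₗ[R] M).liftBaseChange S).ker =
      ⨆ a ∈ s, (diagonalDiff R M a).range := by
  rw [ker_liftBaseChange_id_eq_iSup]
  exact le_antisymm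
    (iSup_le fun _ ↦ range_diagonalDiff_le_of_mem_adjoin R M (hs ▸ Algebra.mem_top))
    (iSup_mono fun _ ↦ iSup_le fun _ ↦ le_rfl)

lemma fg_ker_liftBaseChange_id [Algebra.FiniteType R S] [Module.Finite R M] :
    ((LinearMap.id : M →ₗ[R] M).liftBaseChange S).ker.FG := by
  obtain ⟨s, hs⟩ := Algebra.FiniteType.out (R := R) (A := S)
  rw [ker_liftBaseChange_id_eq_biSup_of_adjoin_eq_top R M hs]
  exact Submodule.fg_biSup s _ fun _ _ ↦ Module.Finite.iff_fg.mp inferInstance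

variable (S)

lemma finitePresentation_of_restrictScalars [Algebra.FiniteType R S]
    [Module.FinitePresentation R M] : Module.FinitePresentation S M :=
  Module.finitePresentation_of_surjective ((LinearMap.id : M →ₗ[R] M).liftBaseChange S)
    (fun m ↦ ⟨1 ⊗ₜ m, by simp⟩) (fg_ker_liftBaseChange_id R M)

variable {R S}

lemma finitePresentation_restrictScalars_of_surjective
    (hsurj : Function.Surjective (algebraMap R S)) (hker : (RingHom.ker (algebraMap R S)).FG)
    [Module.FinitePresentation S M] : Module.FinitePresentation R M :=
  have : Module.FinitePresentation R S :=
    Module.finitePresentation_of_surjective (Algebra.linearMap R S) hsurj hker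
  Module.FinitePresentation.trans R M S

end Module

/-- Let `A` be a commutative ring, `B` an `A`-algebra of finite presentation,
and `M` a `B`-module. Then `M` is intrinsically of finite presentation over `A` if and only if
`M` is finitely presented as a `B`-module. -/
theorem Module.intrinsicallyFinitePresentation_iff_finitePresentation
    (A B M : Type*) [CommRing A] [CommRing B] [Algebra A B] [Algebra.FinitePresentation A B]
    [AddCommGroup M] [Module B M] :
    Module.IntrinsicallyFinitePresentation A B M ↔ Module.FinitePresentation B M := by
  constructor
  · rintro ⟨n, f, hM⟩
    let _ : Module (MvPolynomial (Fin n) A) M := Module.compHom M f.toRingHom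
    algebraize [f.toRingHom]
    have : IsScalarTower (MvPolynomial (Fin n) A) B M := .of_algebraMap_smul fun _ _ ↦ rfl
    have : Algebra.FiniteType (MvPolynomial (Fin n) A) B := .of_restrictScalars_finiteType A _ B
    exact Module.finitePresentation_of_restrictScalars (MvPolynomial (Fin n) A) B M
  · intro _
    obtain ⟨n, f, hsurj, hker⟩ := Algebra.FinitePresentation.out (R := A) (A := B)
    let _ : Module (MvPolynomial (Fin n) A) M := Module.compHom M f.toRingHom
    algebraize [f.toRingHom]
    have : IsScalarTower (MvPolynomial (Fin n) A) B M := .of_algebraMap_smul fun _ _ ↦ rfl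
    exact ⟨n, f, Module.finitePresentation_restrictScalars_of_surjective M hsurj hker⟩
end

section
/- Let A be a commutative ring, B an A-algebra, and C a B-algebra. Then C is intrinsically of finite presentation over A (as a B-module) if and only if C is finitely generated as a B-module and of finite presentation as an A-algebra. -/
/-!
The underlying tower is `A → A[x₁, …, xₙ] → B → C`. Since `A[x₁, …, xₙ]` is itself of finite
presentation over `A`, the algebra `C` is finitely presented as an `A[x₁, …, xₙ]`-module exactly
when it is finite over `A[x₁, …, xₙ]` and of finite presentation over `A`. What remains is to make
`C` finite over some polynomial ring mapping to `B`: by the Artin–Tate argument, an algebra that is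
finite over `B` and of finite type over `A` is already finite over a finitely generated
`A`-subalgebra of `B`, and such a subalgebra is a quotient of a polynomial ring.
-/

namespace Module

theorem finite_of_finite_compHom {P B M : Type*} [Semiring P] [Semiring B] [AddCommMonoid M]
    [Module B M] (f : P →+* B)
    (h : letI := Module.compHom M f; Module.Finite P M) : Module.Finite B M := by
  let := Module.compHom M f
  let := Module.compHom B f
  have : IsScalarTower P B M := ⟨fun p b m ↦ mul_smul (f p) b m⟩
  exact .of_restrictScalars_finite P B M

theorem finite_compHom_of_surjective {P B M : Type*} [CommSemiring P] [CommSemiring B]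
    [AddCommMonoid M] [Module B M] [Module.Finite B M] {f : P →+* B}
    (hf : Function.Surjective f) : letI := Module.compHom M f; Module.Finite P M := by
  let := f.toAlgebra
  let := Module.compHom M f
  have : IsScalarTower P B M := .of_compHom P B M
  exact ⟨(Module.Finite.fg_top (R := B) (M := M)).restrictScalars_of_surjective hf⟩

theorem finite_iff_exists_mvPolynomial_finite_compHom (A B C : Type*) [CommSemiring A]
    [CommSemiring B] [Semiring C] [Algebra A B] [Algebra B C] [Algebra A C] [IsScalarTower A B C]
    [Algebra.FiniteType A C] :
    Module.Finite B C ↔ ∃ (n : ℕ) (f : MvPolynomial (Fin n) A →ₐ[A] B),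
      letI := Module.compHom C f.toRingHom; Module.Finite (MvPolynomial (Fin n) A) C := by
  refine ⟨fun hBC ↦ ?_, fun ⟨_, f, hf⟩ ↦ finite_of_finite_compHom f.toRingHom hf⟩
  obtain ⟨B₀, hB₀, hB₀C⟩ := exists_subalgebra_of_fg A B C Algebra.FiniteType.out hBC.fg_top
  obtain ⟨n, g, hg⟩ := Algebra.FiniteType.iff_quotient_mvPolynomial''.1
    (B₀.fg_iff_finiteType.1 hB₀)
  have : Module.Finite B₀ C := ⟨hB₀C⟩
  exact ⟨n, B₀.val.comp g, finite_compHom_of_surjective (M := C) (f := g.toRingHom) hg⟩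

theorem finitePresentation_iff_finite_and_algebraFinitePresentation (A P C : Type*) [CommRing A]
    [CommRing P] [CommRing C] [Algebra A P] [Algebra P C] [Algebra A C] [IsScalarTower A P C]
    [Algebra.FinitePresentation A P] :
    Module.FinitePresentation P C ↔ Module.Finite P C ∧ Algebra.FinitePresentation A C := by
  constructor
  · intro _
    exact ⟨inferInstance, .trans A P C⟩
  · rintro ⟨_, _⟩
    have : Algebra.FinitePresentation P C := .of_restrict_scalars_finitePresentation A P C
    exact .of_finite_of_finitePresentation P C

theorem finitePresentation_compHom_iff {A P B : Type*} (C : Type*) [CommRing A] [CommRing P]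
    [CommRing B] [CommRing C] [Algebra A P] [Algebra A B] [Algebra B C] [Algebra A C]
    [IsScalarTower A B C] [Algebra.FinitePresentation A P] (f : P →ₐ[A] B) :
    letI := Module.compHom C f.toRingHom
    Module.FinitePresentation P C ↔ Module.Finite P C ∧ Algebra.FinitePresentation A C := by
  let := Algebra.compHom C f.toRingHom
  have : IsScalarTower A P C := .of_algebraMap_eq' <| by
    rw [Algebra.compHom_algebraMap_eq, RingHom.comp_assoc, AlgHom.toRingHom_eq_coe,
      f.comp_algebraMap, ← IsScalarTower.algebraMap_eq]
  exact finitePresentation_iff_finite_and_algebraFinitePresentation A P C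

end Module

/-- Let `A` be a commutative ring, `B` an `A`-algebra, and `C` a `B`-algebra
(hence also an `A`-algebra). Then `C` is intrinsically of finite presentation over `A` as a
`B`-module if and only if `C` is finitely generated as a `B`-module and of finite presentation
as an `A`-algebra. -/
theorem Module.intrinsicallyFinitePresentation_algebra_iff
    (A B C : Type*) [CommRing A] [CommRing B] [CommRing C]
    [Algebra A B] [Algebra B C] [Algebra A C] [IsScalarTower A B C] :
    Module.IntrinsicallyFinitePresentation A B C ↔
      Module.Finite B C ∧ Algebra.FinitePresentation A C := by
  simp only [Module.IntrinsicallyFinitePresentation, Module.finitePresentation_compHom_iff,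
    exists_and_right]
  exact and_congr_left fun _ ↦
    (Module.finite_iff_exists_mvPolynomial_finite_compHom A B C).symm
end

section
/- Let A be a commutative ring, B an A-algebra, M a B-module, and B' a B-algebra of finite presentation. If M is intrinsically of finite presentation over A, then M ⊗_B B', viewed as a B'-module, is intrinsically of finite presentation over A. -/
open TensorProduct

/-!
A module that is finitely presented over *some* finitely presented `A`-algebra acting through `B` is
already intrinsically of finite presentation over `A`, because that algebra is itself a finitely
presented module over any polynomial ring presenting it. Now factor `B → B'` as a polynomial
extension `B → B[x₁, …, xₖ]` followed by a surjection with finitely generated kernel `I`. Along the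
first map, a presentation over a polynomial ring `P` base changes to one over `P[x₁, …, xₖ]`. Along
the second, the base change is the quotient by `I • ⊤`, and this submodule is finitely generated
over `P[x₁, …, xₖ]` because it is a finite sum of images of multiplication maps.
-/

section IdealSMul

open scoped Pointwise

variable {Q C N : Type*} [CommSemiring Q] [CommSemiring C] [Algebra Q C]
  [AddCommMonoid N] [Module C N] [Module Q N] [IsScalarTower Q C N]

lemma restrictScalars_span_smul_eq_iSup (s : Set C) (L : Submodule C N) :
    (Ideal.span s • L).restrictScalars Q = ⨆ c ∈ s, c • L.restrictScalars Q := by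
  rw [Submodule.span_smul_eq, Submodule.set_smul_eq_iSup]
  exact map_iSup₂ (Submodule.restrictScalarsLatticeHom Q C N) _

lemma fg_restrictScalars_ideal_smul {I : Ideal C} (hI : I.FG) {L : Submodule C N}
    (hL : (L.restrictScalars Q).FG) : ((I • L).restrictScalars Q).FG := by
  obtain ⟨s, rfl⟩ := hI
  rw [restrictScalars_span_smul_eq_iSup]
  exact Submodule.fg_biSup s _ fun _ _ ↦ hL.map _

end IdealSMul

section Surjective

variable {C D : Type*} (N : Type*) [CommRing C] [CommRing D] [Algebra C D]
  [AddCommGroup N] [Module C N]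

lemma ker_tensorProductMk_of_surjective (hs : Function.Surjective (algebraMap C D)) :
    LinearMap.ker (TensorProduct.mk C D N 1) = RingHom.ker (algebraMap C D) • ⊤ := by
  have mk_comp_lid : TensorProduct.mk C D N 1 ∘ₗ (TensorProduct.lid C N).toLinearMap =
      (Algebra.linearMap C D).rTensor N := by
    ext; simp
  have exact_rTensor :=
    rTensor_exact N (LinearMap.exact_subtype_ker_map (Algebra.linearMap C D)) hs
  apply Submodule.comap_injective_of_surjective (TensorProduct.lid C N).surjective
  rw [← LinearMap.ker_comp, mk_comp_lid, exact_rTensor.linearMap_ker_eq,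
    Submodule.comap_equiv_eq_map_symm, eq_comm, Submodule.map_symm_eq_iff]
  exact Submodule.map_range_rTensor_subtype_lid

lemma finitePresentation_tensorProduct_of_surjective (Q : Type*) [CommRing Q] [Algebra Q C]
    [Algebra Q D] [IsScalarTower Q C D] [Module Q N] [IsScalarTower Q C N]
    [Module.FinitePresentation Q N] (hs : Function.Surjective (algebraMap C D))
    (hker : (RingHom.ker (algebraMap C D)).FG) : Module.FinitePresentation Q (D ⊗[C] N) := by
  refine Module.finitePresentation_of_surjective ((TensorProduct.mk C D N 1).restrictScalars Q)
    (TensorProduct.mk_surjective C N D hs) ?_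
  rw [LinearMap.ker_restrictScalars, ker_tensorProductMk_of_surjective N hs]
  exact fg_restrictScalars_ideal_smul hker Module.Finite.fg_top

end Surjective

attribute [local instance] MvPolynomial.algebraMvPolynomial

lemma isScalarTower_mvPolynomial (σ R P B : Type*) [CommSemiring R] [CommSemiring P]
    [CommSemiring B] [Algebra R P] [Algebra P B] [Algebra R B] [IsScalarTower R P B] :
    IsScalarTower R (MvPolynomial σ P) (MvPolynomial σ B) :=
  .of_algebraMap_eq fun r ↦ by
    rw [MvPolynomial.algebraMap_apply, MvPolynomial.algebraMap_apply, MvPolynomial.algebraMap_def,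
      MvPolynomial.map_C, ← IsScalarTower.algebraMap_apply R P B]

lemma finitePresentation_mvPolynomial_tensorProduct (σ P B M : Type*) [CommRing P] [CommRing B]
    [Algebra P B] [AddCommGroup M] [Module B M] [Module P M] [IsScalarTower P B M]
    [Module.FinitePresentation P M] :
    Module.FinitePresentation (MvPolynomial σ P) (MvPolynomial σ B ⊗[B] M) :=
  .of_equiv <| .symm <|
    Algebra.IsPushout.cancelBaseChange P (MvPolynomial σ P) B (MvPolynomial σ B) M

namespace Module.IntrinsicallyFinitePresentation

lemma of_finitePresentation_algebra {R S N : Type*} (Q : Type*) [CommRing R] [CommRing Q]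
    [CommRing S] [Algebra R Q] [Algebra Q S] [Algebra R S] [IsScalarTower R Q S]
    [AddCommGroup N] [Module S N] [Module Q N] [IsScalarTower Q S N]
    [Algebra.FinitePresentation R Q] [Module.FinitePresentation Q N] :
    IntrinsicallyFinitePresentation R S N := by
  obtain ⟨n, g, hg, hker⟩ := Algebra.FinitePresentation.out (R := R) (A := Q)
  let f := (IsScalarTower.toAlgHom R Q S).comp g
  let : Algebra (MvPolynomial (Fin n) R) Q := g.toAlgebra
  let : Module (MvPolynomial (Fin n) R) N := Module.compHom N f.toRingHom
  have : IsScalarTower (MvPolynomial (Fin n) R) Q N :=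
    .of_algebraMap_smul fun p x ↦ (algebraMap_smul S (g p) x).symm
  have : Module.FinitePresentation (MvPolynomial (Fin n) R) Q :=
    Module.finitePresentation_of_surjective (Algebra.linearMap _ Q) hg hker
  exact ⟨n, f, Module.FinitePresentation.trans _ N Q⟩

section BaseChange

variable {A B M : Type*} [CommRing A] [CommRing B] [Algebra A B] [AddCommGroup M] [Module B M]

lemma of_linearEquiv {M' : Type*} [AddCommGroup M'] [Module B M'] (e : M ≃ₗ[B] M')
    (h : IntrinsicallyFinitePresentation A B M) : IntrinsicallyFinitePresentation A B M' := by
  obtain ⟨n, f, hf⟩ := h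
  let : Module (MvPolynomial (Fin n) A) M := Module.compHom M f.toRingHom
  let : Module (MvPolynomial (Fin n) A) M' := Module.compHom M' f.toRingHom
  exact ⟨n, f, .of_equiv { e with map_smul' := fun p ↦ e.map_smul (f p) }⟩

lemma baseChange_mvPolynomial (σ : Type*) [Finite σ]
    (h : IntrinsicallyFinitePresentation A B M) :
    IntrinsicallyFinitePresentation A (MvPolynomial σ B) (MvPolynomial σ B ⊗[B] M) := by
  obtain ⟨n, f, hf⟩ := h
  let P := MvPolynomial (Fin n) A
  let : Algebra P B := f.toAlgebra
  let : Module P M := Module.compHom M f.toRingHom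
  have : IsScalarTower P B M := .of_algebraMap_smul fun _ _ ↦ rfl
  have : IsScalarTower A P B := .of_algHom f
  have := isScalarTower_mvPolynomial σ A P B
  have := finitePresentation_mvPolynomial_tensorProduct σ P B M
  exact of_finitePresentation_algebra (MvPolynomial σ P)

lemma baseChange_of_surjective {D : Type*} [CommRing D] [Algebra B D] [Algebra A D]
    [IsScalarTower A B D] (hs : Function.Surjective (algebraMap B D))
    (hker : (RingHom.ker (algebraMap B D)).FG) (h : IntrinsicallyFinitePresentation A B M) :
    IntrinsicallyFinitePresentation A D (D ⊗[B] M) := by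
  obtain ⟨n, f, hf⟩ := h
  let P := MvPolynomial (Fin n) A
  let g : P →ₐ[A] D := (IsScalarTower.toAlgHom A B D).comp f
  let : Algebra P B := f.toAlgebra
  let : Algebra P D := g.toAlgebra
  let : Module P M := Module.compHom M f.toRingHom
  have : IsScalarTower P B M := .of_algebraMap_smul fun _ _ ↦ rfl
  have : IsScalarTower P B D := .of_algebraMap_eq fun _ ↦ rfl
  have : IsScalarTower A P D := .of_algHom g
  have := finitePresentation_tensorProduct_of_surjective M P hs hker
  exact of_finitePresentation_algebra P

end BaseChange

end Module.IntrinsicallyFinitePresentation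

/-- Let `A` be a commutative ring, `B` an `A`-algebra, `M` a `B`-module, and
`B'` a `B`-algebra of finite presentation (an `A`-algebra via composition). If `M` is
intrinsically of finite presentation over `A`, then `M ⊗[B] B'` (written here, following
Mathlib's convention for base change, as `B' ⊗[B] M`), viewed as a `B'`-module, is
intrinsically of finite presentation over `A`. -/
theorem Module.IntrinsicallyFinitePresentation.baseChange_finitePresentation
    (A B B' M : Type*) [CommRing A] [CommRing B] [CommRing B'] [Algebra A B]
    [Algebra B B'] [Algebra A B'] [IsScalarTower A B B'] [Algebra.FinitePresentation B B']
    [AddCommGroup M] [Module B M]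
    (h : Module.IntrinsicallyFinitePresentation A B M) :
    Module.IntrinsicallyFinitePresentation A B' (B' ⊗[B] M) := by
  obtain ⟨k, g, hg, hker⟩ := Algebra.FinitePresentation.out (R := B) (A := B')
  let : Algebra (MvPolynomial (Fin k) B) B' := g.toAlgebra
  have : IsScalarTower B (MvPolynomial (Fin k) B) B' := .of_algHom g
  have : IsScalarTower A (MvPolynomial (Fin k) B) B' := .to₁₃₄ A B _ _
  exact ((h.baseChange_mvPolynomial (Fin k)).baseChange_of_surjective hg hker).of_linearEquiv
    (AlgebraTensorModule.cancelBaseChange B (MvPolynomial (Fin k) B) B' B' M)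
end
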